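/- Let m, n, λ be positive integers with m ≤ n and let r ≥ 0. Then f_r(m,n,λ)/r! = (1/Λ_{m,n}) · Σ_{(a_1,…,a_m) ∈ ℕ^m, a_1+⋯+a_m = r} [ ∏_{k=1}^{m} λ^{(a_k)}/a_k! ] · ∫_{[0,∞)^m} Δ(q)² ∏_{k=1}^{m} q_k^{n−m+a_k} e^{−q_k} dq. (This is the coefficient of x^r in the paper's integral representation F(m,n,λ;x) = (1/Λ_{mn}) ∫ Δ²(q_1,…,q_m) ∏_k e^{−q_k} q_k^{n−m} [Σ_{a≥0} (Γ(λ+a)/(a!Γ(λ))) q_k^a x^a] dq_k.) -/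

import Mathlib

open Finset MeasureTheory

/-- Number of cycles of a permutation, counting fixed points as cycles of length 1. -/
def cyc {r : ℕ} (σ : Equiv.Perm (Fin r)) : ℕ :=
  σ.cycleType.card + (Finset.univ.filter fun x => σ x = x).card

/-- `f_r(m,n,λ) = Σ_{(σ,τ) ∈ S_r × S_r} m^{cyc σ} n^{cyc τ} λ^{cyc((στ)⁻¹)}`,
summed over all pairs; for `r = 0` this sum is `1`. -/
def fSum (r m n lam : ℕ) : ℕ :=
  ∑ σ : Equiv.Perm (Fin r), ∑ τ : Equiv.Perm (Fin r),
    m ^ cyc σ * n ^ cyc τ * lam ^ cyc (σ * τ)⁻¹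

/-- The Vandermonde determinant `Δ(q) = ∏_{i<j} (q_j - q_i)`. -/
def vandermonde {m : ℕ} (q : Fin m → ℝ) : ℝ :=
  ∏ p ∈ Finset.univ.filter (fun p : Fin m × Fin m => p.1 < p.2), (q p.2 - q p.1)

/-- The positive orthant `[0,∞)^m`. -/
def orthant (m : ℕ) : Set (Fin m → ℝ) := {q | ∀ k, 0 ≤ q k}

/-- `Λ_{m,n} = ∫_{[0,∞)^m} Δ(q)² ∏_k q_k^{n-m} e^{-q_k} dq`. -/
noncomputable def Lam (m n : ℕ) : ℝ :=
  ∫ q in orthant m, (vandermonde q) ^ 2 *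
    ∏ k : Fin m, (q k ^ (n - m) * Real.exp (-(q k)))


/-! ### Fixed functions of a permutation -/

/-- The number of colourings by `k` colours fixed by `σ`. -/
def fixN {α : Type} [Fintype α] [DecidableEq α] (k : ℕ) (σ : Equiv.Perm α) : ℕ :=
  (Finset.univ.filter fun φ : α → Fin k => φ ∘ σ = φ).card

/-- The block (non trivial cycle or fixed point) of an element. -/
def blockOf {r : ℕ} (σ : Equiv.Perm (Fin r)) (x : Fin r) :
    {c // c ∈ σ.cycleFactorsFinset} ⊕ {x : Fin r // σ x = x} :=
  if h : σ x = x then Sum.inr ⟨x, h⟩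
  else Sum.inl ⟨σ.cycleOf x, Equiv.Perm.cycleOf_mem_cycleFactorsFinset_iff.2
    (Equiv.Perm.mem_support.2 h)⟩

theorem blockOf_surjective {r : ℕ} (σ : Equiv.Perm (Fin r)) :
    Function.Surjective (blockOf σ) := by
  rintro (⟨c, hc⟩ | ⟨x, hx⟩)
  · obtain ⟨h1, h2⟩ := Equiv.Perm.mem_cycleFactorsFinset_iff.1 hc
    obtain ⟨x, hx, -⟩ := h1
    have hxs : x ∈ c.support := Equiv.Perm.mem_support.2 hx
    have h3 : σ x ≠ x := by rw [← h2 x hxs]; exact hx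
    refine ⟨x, ?_⟩
    have := Equiv.Perm.cycle_is_cycleOf hxs hc
    simp [blockOf, h3, this]
  · exact ⟨x, by simp [blockOf, hx]⟩

theorem blockOf_apply {r : ℕ} (σ : Equiv.Perm (Fin r)) (x : Fin r) :
    blockOf σ (σ x) = blockOf σ x := by
  by_cases h : σ x = x
  · rw [h]
  · have h2 : σ (σ x) ≠ σ x := fun h' => h (σ.injective h')
    simp only [blockOf, h, h2, dite_false]
    congr 2
    exact Equiv.Perm.SameCycle.cycleOf_eq (Equiv.Perm.sameCycle_apply_left.2
      (Equiv.Perm.SameCycle.refl _ _))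

theorem sameCycle_of_blockOf {r : ℕ} (σ : Equiv.Perm (Fin r)) (x y : Fin r)
    (h : blockOf σ x = blockOf σ y) : σ.SameCycle x y := by
  by_cases hx : σ x = x <;> by_cases hy : σ y = y <;> simp [blockOf, hx, hy] at h
  · rw [h]
  · exact (Equiv.Perm.sameCycle_iff_cycleOf_eq_of_mem_support
      (Equiv.Perm.mem_support.2 hx) (Equiv.Perm.mem_support.2 hy)).2 h

theorem fixed_of_sameCycle {r : ℕ} {β : Type} (σ : Equiv.Perm (Fin r)) (φ : Fin r → β)
    (hφ : φ ∘ σ = φ) (x y : Fin r) (h : σ.SameCycle x y) : φ x = φ y := by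
  obtain ⟨i, -, -, rfl⟩ := Equiv.Perm.SameCycle.exists_pow_eq σ h
  clear h
  induction i with
  | zero => simp
  | succ k ih =>
    rw [pow_succ', Equiv.Perm.mul_apply, ih]
    exact (congrFun hφ _).symm

theorem fixN_eq_pow_cyc {r : ℕ} (k : ℕ) (σ : Equiv.Perm (Fin r)) :
    fixN k σ = k ^ cyc σ := by
  have hcard : Fintype.card ({c // c ∈ σ.cycleFactorsFinset} ⊕ {x : Fin r // σ x = x})
      = cyc σ := by
    rw [Fintype.card_sum, cyc, Equiv.Perm.cycleType_def]
    simp [Fintype.card_subtype]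
  rw [← hcard]
  have : Fintype.card (({c // c ∈ σ.cycleFactorsFinset} ⊕ {x : Fin r // σ x = x}) → Fin k) =
    k ^ Fintype.card ({c // c ∈ σ.cycleFactorsFinset} ⊕ {x : Fin r // σ x = x}) := by
    rw [Fintype.card_fun, Fintype.card_fin]
  rw [← this, fixN, ← Finset.card_univ]
  symm
  apply Finset.card_bij (fun ψ _ => ψ ∘ blockOf σ)
  · intro ψ _
    simp only [Finset.mem_filter, Finset.mem_univ, true_and]
    funext x
    simp [blockOf_apply]
  · intro ψ _ ψ' _ h
    exact (blockOf_surjective σ).injective_comp_right h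
  · intro φ hφ
    simp only [Finset.mem_filter, Finset.mem_univ, true_and] at hφ
    refine ⟨fun b => φ (Function.surjInv (blockOf_surjective σ) b), Finset.mem_univ _, ?_⟩
    funext x
    apply fixed_of_sameCycle σ φ hφ
    apply sameCycle_of_blockOf
    exact Function.surjInv_eq (blockOf_surjective σ) _

theorem comp_perm_inv {α β : Type} (σ : Equiv.Perm α) (φ : α → β) :
    φ ∘ ⇑σ⁻¹ = φ ↔ φ ∘ σ = φ := by
  constructor
  · intro h
    conv_lhs => rw [← h]
    funext x; simp
  · intro h
    conv_lhs => rw [← h]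
    funext x; simp

theorem fixN_inv {α : Type} [Fintype α] [DecidableEq α] (k : ℕ) (σ : Equiv.Perm α) :
    fixN k σ⁻¹ = fixN k σ := by
  simp only [fixN, comp_perm_inv]

theorem fixN_permCongr {α β : Type} [Fintype α] [DecidableEq α] [Fintype β] [DecidableEq β]
    (e : α ≃ β) (k : ℕ) (σ : Equiv.Perm α) :
    fixN k (e.permCongr σ) = fixN k σ := by
  unfold fixN
  apply Finset.card_bij (fun φ _ => φ ∘ e)
  · intro φ h
    simp only [Finset.mem_filter, Finset.mem_univ, true_and] at h ⊢
    funext x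
    have := congrFun h (e x)
    simpa using this
  · intro φ _ φ' _ h
    exact e.surjective.injective_comp_right h
  · intro φ h
    simp only [Finset.mem_filter, Finset.mem_univ, true_and] at h
    refine ⟨φ ∘ e.symm, ?_, by funext x; simp⟩
    simp only [Finset.mem_filter, Finset.mem_univ, true_and]
    funext x
    have := congrFun h (e.symm x)
    simpa using this

/-- The fixed functions of `swap none a * σ` on `Option α`. -/
theorem comp_swap_optionCongr {α β : Type} [DecidableEq α] (σ : Equiv.Perm α) (a : Option α)
    (φ : Option α → β) :
    φ ∘ ⇑(Equiv.swap none a * Equiv.optionCongr σ) = φ ↔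
      ((fun x => φ (some x)) ∘ σ = fun x => φ (some x)) ∧ φ none = φ a := by
  cases a with
  | none =>
    simp only [funext_iff, Function.comp]
    constructor
    · intro h
      exact ⟨fun x => by simpa using h (some x), trivial⟩
    · rintro ⟨h, -⟩ (_ | x)
      · simp
      · simpa using h x
  | some y =>
    simp only [funext_iff, Function.comp, Equiv.Perm.mul_apply, Equiv.optionCongr_apply]
    constructor
    · intro h
      have h0 := h none
      simp only [Option.map_none, Equiv.swap_apply_left] at h0
      refine ⟨fun x => ?_, h0.symm⟩
      have h1 := h (some x)
      simp only [Option.map_some] at h1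
      by_cases hy : σ x = y
      · rw [hy, Equiv.swap_apply_right] at h1
        rw [hy, h0, h1]
      · rwa [Equiv.swap_apply_of_ne_of_ne (by simp) (by simpa using hy)] at h1
    · rintro ⟨h, h0⟩ (_ | x)
      · simp [h0]
      · simp only [Option.map_some]
        by_cases hy : σ x = y
        · rw [hy, Equiv.swap_apply_right, h0, ← hy, h]
        · rw [Equiv.swap_apply_of_ne_of_ne (by simp) (by simpa using hy), h]

/-- weight of the new point -/
def wt {α : Type} (k : ℕ) : Option α → ℕ
  | none => k
  | some _ => 1

theorem fixN_swap_optionCongr {α : Type} [Fintype α] [DecidableEq α] (k : ℕ)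
    (σ : Equiv.Perm α) (a : Option α) :
    fixN k (Equiv.swap none a * Equiv.optionCongr σ) = wt k a * fixN k σ := by
  unfold fixN
  simp only [comp_swap_optionCongr]
  cases a with
  | none =>
    simp only [wt, and_true]
    have : ∀ t : ℕ, k * t = (Finset.univ : Finset (Fin k)).card * t := by simp
    rw [this, ← Finset.card_product]
    apply Finset.card_bij (fun φ _ => (φ none, fun x => φ (some x)))
    · intro φ h
      simpa using h
    · intro φ _ φ' _ h
      simp only [Prod.mk.injEq] at h
      funext x
      cases x with
      | none => exact h.1
      | some x => exact congrFun h.2 x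
    · rintro ⟨c, ψ⟩ h
      refine ⟨fun x => x.elim c ψ, ?_, ?_⟩
      · simpa using h
      · simp
  | some y =>
    simp only [wt, one_mul]
    apply Finset.card_bij (fun φ _ => (fun x => φ (some x)))
    · intro φ h
      simp only [Finset.mem_filter, Finset.mem_univ, true_and] at h ⊢
      exact h.1
    · intro φ h φ' h' hh
      simp only [Finset.mem_filter, Finset.mem_univ, true_and] at h h'
      funext x
      cases x with
      | none => rw [h.2, h'.2]; exact congrFun hh y
      | some x => exact congrFun hh x
    · intro ψ h
      refine ⟨fun x => x.elim (ψ y) ψ, ?_, ?_⟩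
      · simpa using h
      · simp

/-! ### The convolution of the two colouring weights -/

/-- `Σ_{σ τ = π} m^{cyc σ} n^{cyc τ}`, written with `u = τ⁻¹`. -/
def conv {α : Type} [Fintype α] [DecidableEq α] (m n : ℕ) (π : Equiv.Perm α) : ℕ :=
  ∑ u : Equiv.Perm α, fixN m (π * u) * fixN n u

theorem conv_permCongr {α β : Type} [Fintype α] [DecidableEq α] [Fintype β] [DecidableEq β]
    (e : α ≃ β) (m n : ℕ) (σ : Equiv.Perm α) :
    conv m n (e.permCongr σ) = conv m n σ := by
  unfold conv
  rw [← Equiv.sum_comp e.permCongr]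
  refine Finset.sum_congr rfl fun u _ => ?_
  have : e.permCongr σ * e.permCongr u = e.permCongr (σ * u) := by
    ext x; simp [Equiv.permCongr_apply]
  rw [this, fixN_permCongr, fixN_permCongr]

theorem oc_mul {α : Type} (σ τ : Equiv.Perm α) :
    Equiv.optionCongr (σ * τ) = Equiv.optionCongr σ * Equiv.optionCongr τ := by
  ext1 x
  cases x <;> simp

theorem oc_mul_swap {α : Type} [DecidableEq α] (σ : Equiv.Perm α) (x : α) :
    Equiv.optionCongr σ * Equiv.swap none (some x) =
      Equiv.swap none (some (σ x)) * Equiv.optionCongr σ := by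
  have := Equiv.mul_swap_eq_swap_mul (Equiv.optionCongr σ) none (some x)
  simpa using this

theorem sum_perm_option {α : Type} [Fintype α] [DecidableEq α] {M : Type} [AddCommMonoid M]
    (f : Equiv.Perm (Option α) → M) :
    ∑ u, f u = ∑ b : Option α, ∑ u : Equiv.Perm α, f (Equiv.swap none b * Equiv.optionCongr u) := by
  rw [← Equiv.sum_comp Equiv.Perm.decomposeOption.symm, Fintype.sum_prod_type]
  rfl

theorem conv_inner {α : Type} [Fintype α] [DecidableEq α] (m n : ℕ)
    (π : Equiv.Perm (Option α)) (b a : Option α) (ρ : Equiv.Perm α)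
    (h : π * Equiv.swap none b = Equiv.swap none a * Equiv.optionCongr ρ) :
    ∑ u : Equiv.Perm α, fixN m (π * (Equiv.swap none b * Equiv.optionCongr u)) *
      fixN n (Equiv.swap none b * Equiv.optionCongr u) = wt m a * wt n b * conv m n ρ := by
  unfold conv
  rw [Finset.mul_sum]
  refine Finset.sum_congr rfl fun u _ => ?_
  rw [← mul_assoc, h, mul_assoc, ← oc_mul, fixN_swap_optionCongr, fixN_swap_optionCongr]
  ring

theorem conv_oc {α : Type} [Fintype α] [DecidableEq α] (m n : ℕ) (σ : Equiv.Perm α) :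
    conv m n (Equiv.optionCongr σ) = (m * n + Fintype.card α) * conv m n σ := by
  conv_lhs => unfold conv
  rw [sum_perm_option, Fintype.sum_option]
  rw [conv_inner m n _ none none σ (by simp [Equiv.swap_self, ← Equiv.Perm.one_def])]
  rw [Finset.sum_congr rfl fun x _ => conv_inner m n _ (some x) (some (σ x)) σ (oc_mul_swap σ x)]
  simp [wt]
  ring

theorem conv_oc_swap {α : Type} [Fintype α] [DecidableEq α] (m n : ℕ) (σ : Equiv.Perm α) (z : α) :
    conv m n (Equiv.optionCongr σ * Equiv.swap none (some z)) =
      (m + n) * conv m n σ +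
        ∑ x ∈ Finset.univ.erase z, conv m n (σ * Equiv.swap x z) := by
  conv_lhs => unfold conv
  rw [sum_perm_option, Fintype.sum_option]
  rw [conv_inner m n _ none (some (σ z)) σ
    (by rw [oc_mul_swap]; simp [Equiv.swap_self, ← Equiv.Perm.one_def])]
  rw [← Finset.add_sum_erase _ _ (Finset.mem_univ z)]
  rw [conv_inner m n _ (some z) none σ
    (by rw [mul_assoc, Equiv.swap_mul_self]; simp [Equiv.swap_self, ← Equiv.Perm.one_def])]
  rw [Finset.sum_congr rfl fun x hx =>
    conv_inner m n _ (some x) (some (σ x)) (σ * Equiv.swap x z) ?_]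
  · simp [wt]
    ring
  · have hxz : x ≠ z := (Finset.mem_erase.1 hx).1
    rw [oc_mul, ← mul_assoc, ← oc_mul_swap, mul_assoc, mul_assoc]
    congr 1
    rw [Equiv.optionCongr_swap]
    have h := Equiv.mul_swap_eq_swap_mul (Equiv.swap (none : Option α) (some x)) (some x) (some z)
    rw [Equiv.swap_apply_right, Equiv.swap_apply_of_ne_of_ne (by simp) (by simpa using hxz.symm)] at h
    exact h.symm

/-! ### Polynomials and the loop equations -/

section Poly

open MvPolynomial

/-- The monomial attached to a colouring. -/
noncomputable def monoOf {α : Type} [Fintype α] {m : ℕ} (φ : α → Fin m) : MvPolynomial (Fin m) ℝ :=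
  ∏ x, X (φ x)

/-- The power sum attached to a permutation. -/
noncomputable def pw {α : Type} [Fintype α] [DecidableEq α] (m : ℕ) (σ : Equiv.Perm α) :
    MvPolynomial (Fin m) ℝ :=
  ∑ φ ∈ Finset.univ.filter (fun φ : α → Fin m => φ ∘ σ = φ), monoOf φ

/-- A linear functional given by its values on monomials. -/
noncomputable def linOf {m : ℕ} (F : (Fin m →₀ ℕ) → ℝ) : MvPolynomial (Fin m) ℝ →ₗ[ℝ] ℝ :=
  (basisMonomials (Fin m) ℝ).constr ℝ F

theorem linOf_monomial {m : ℕ} (F : (Fin m →₀ ℕ) → ℝ) (a : Fin m →₀ ℕ) (c : ℝ) :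
    linOf F (monomial a c) = c * F a := by
  have h1 : (monomial a c : MvPolynomial (Fin m) ℝ) = c • basisMonomials (Fin m) ℝ a := by
    rw [coe_basisMonomials, smul_monomial, smul_eq_mul, mul_one]
  rw [h1, map_smul, linOf, Module.Basis.constr_basis, smul_eq_mul]

/-- The Laguerre functional. -/
noncomputable def lag (m d : ℕ) : MvPolynomial (Fin m) ℝ →ₗ[ℝ] ℝ :=
  linOf fun a => ∏ k, ((d + a k).factorial : ℝ)

theorem lag_ibp (m d : ℕ) (k : Fin m) (g : MvPolynomial (Fin m) ℝ) :
    lag m d (X k * g) = lag m d (X k * pderiv k g) + (d + 1) * lag m d g := by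
  induction g using MvPolynomial.induction_on' with
  | add p q hp hq =>
    simp only [map_add, mul_add, hp, hq]; ring
  | monomial a c =>
    have h1 : (X k * monomial a c : MvPolynomial (Fin m) ℝ) =
        monomial (Finsupp.single k 1 + a) c := by
      rw [X, monomial_mul, one_mul]
    have h2 : (X k * pderiv k (monomial a c) : MvPolynomial (Fin m) ℝ) =
        monomial a ((a k : ℝ) * c) := by
      rw [X_mul_pderiv_monomial, ← map_nsmul, nsmul_eq_mul]
    rw [h1, h2, lag, linOf_monomial, linOf_monomial, linOf_monomial]
    have h3 : ∏ j, ((d + (Finsupp.single k 1 + a : Fin m →₀ ℕ) j).factorial : ℝ) =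
        (d + a k + 1) * ∏ j, ((d + a j).factorial : ℝ) := by
      rw [← Finset.mul_prod_erase _ _ (Finset.mem_univ k),
        ← Finset.mul_prod_erase _ (fun j => ((d + a j).factorial : ℝ)) (Finset.mem_univ k),
        ← mul_assoc]
      congr 1
      · have : d + (Finsupp.single k 1 + a : Fin m →₀ ℕ) k = (d + a k) + 1 := by
          simp; ring
        rw [this, Nat.factorial_succ]
        push_cast; ring
      · refine Finset.prod_congr rfl fun j hj => ?_
        have : j ≠ k := (Finset.mem_erase.1 hj).1
        simp [this.symm]
    rw [h3]; ring

theorem derivation_prod {m : ℕ} {ι : Type} (V : Derivation ℝ (MvPolynomial (Fin m) ℝ)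
    (MvPolynomial (Fin m) ℝ)) (s : Finset ι) (f c : ι → MvPolynomial (Fin m) ℝ)
    (h : ∀ i ∈ s, V (f i) = c i * f i) :
    V (∏ i ∈ s, f i) = (∑ i ∈ s, c i) * ∏ i ∈ s, f i := by
  classical
  induction s using Finset.induction_on with
  | empty => simp
  | insert i s hi ih =>
    rw [Finset.prod_insert hi, Finset.sum_insert hi, Derivation.leibniz,
      ih (fun j hj => h j (Finset.mem_insert_of_mem hj)), h i (Finset.mem_insert_self _ _)]
    simp only [smul_eq_mul]
    ring

/-- The Vandermonde polynomial. -/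
noncomputable def vdm (m : ℕ) : MvPolynomial (Fin m) ℝ :=
  ∏ p ∈ Finset.univ.filter (fun p : Fin m × Fin m => p.1 < p.2), (X p.2 - X p.1)

theorem sum_lt_symm {m : ℕ} {M : Type} [CommRing M] (c : Fin m → Fin m → M)
    (hs : ∀ i l, i ≠ l → c i l = c l i) :
    2 * ∑ p ∈ Finset.univ.filter (fun p : Fin m × Fin m => p.1 < p.2), c p.1 p.2 =
      (∑ i, ∑ l, c i l) - ∑ k, c k k := by
  have h1 : ∑ p ∈ Finset.univ.filter (fun p : Fin m × Fin m => p.1 < p.2), c p.1 p.2 =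
      ∑ i, ∑ l, if i < l then c i l else 0 := by
    rw [Finset.sum_filter, Fintype.sum_prod_type]
  have h2 : ∑ i, ∑ l, (if i < l then c i l else 0) =
      ∑ i, ∑ l, (if l < i then c i l else 0) := by
    rw [Finset.sum_comm]
    refine Finset.sum_congr rfl fun i _ => Finset.sum_congr rfl fun l _ => ?_
    split_ifs with h
    · exact hs _ _ h.ne
    · rfl
  have h3 : ∑ k, c k k = ∑ i, ∑ l, (if i = l then c i l else 0) := by
    simp
  rw [two_mul, h1]
  nth_rewrite 2 [h2]
  rw [h3, ← Finset.sum_add_distrib, ← Finset.sum_sub_distrib]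
  refine Finset.sum_congr rfl fun i _ => ?_
  rw [← Finset.sum_add_distrib, ← Finset.sum_sub_distrib]
  refine Finset.sum_congr rfl fun l _ => ?_
  rcases lt_trichotomy i l with h | h | h
  · simp [h, h.ne, h.not_gt]
  · simp [h]
  · simp [h, h.ne', h.not_gt]

theorem mkDerivation_eq_sum {m : ℕ} (v : Fin m → MvPolynomial (Fin m) ℝ)
    (f : MvPolynomial (Fin m) ℝ) :
    mkDerivation ℝ v f = ∑ k, v k * pderiv k f := by
  have : mkDerivation ℝ v = ∑ k, v k • pderiv k := by
    apply derivation_ext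
    intro i
    rw [mkDerivation_X]
    have h : (∑ k, v k • pderiv (R := ℝ) k) (X i) = ∑ k, v k * pderiv k (X i) := by
      rw [← Derivation.coeFnAddMonoidHom_apply, map_sum, Finset.sum_apply]
      rfl
    rw [h]
    simp [pderiv_X, Pi.single_apply]
  rw [this, ← Derivation.coeFnAddMonoidHom_apply, map_sum, Finset.sum_apply]
  rfl

theorem gen_loop (m d : ℕ) (G : Fin m → MvPolynomial (Fin m) ℝ)
    (c : Fin m → Fin m → MvPolynomial (Fin m) ℝ)
    (hc : ∀ i l, X i * G i - X l * G l = c i l * (X i - X l))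
    (hs : ∀ i l, i ≠ l → c i l = c l i) :
    lag m d ((∑ k, X k * G k) * vdm m ^ 2) =
      lag m d ((∑ k, X k * pderiv k (G k) + (d + 1) * ∑ k, G k +
        ((∑ i, ∑ l, c i l) - ∑ k, c k k)) * vdm m ^ 2) := by
  have hV : mkDerivation ℝ (fun k => X k * G k) (vdm m) =
      (∑ p ∈ Finset.univ.filter (fun p : Fin m × Fin m => p.1 < p.2), c p.1 p.2) * vdm m := by
    unfold vdm
    apply derivation_prod
    rintro ⟨i, l⟩ hp
    simp only [Finset.mem_filter, Finset.mem_univ, true_and] at hp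
    rw [map_sub, mkDerivation_X, mkDerivation_X]
    simp only
    linear_combination -hc i l
  have hV2 : ∑ k, X k * G k * pderiv k (vdm m ^ 2) =
      ((∑ i, ∑ l, c i l) - ∑ k, c k k) * vdm m ^ 2 := by
    rw [← sum_lt_symm c hs, ← mkDerivation_eq_sum, pow_two, Derivation.leibniz, hV]
    simp only [smul_eq_mul]
    ring
  have e1 : lag m d ((∑ k, X k * G k) * vdm m ^ 2) =
      ∑ k, lag m d (X k * (G k * vdm m ^ 2)) := by
    rw [Finset.sum_mul, map_sum]
    simp only [mul_assoc]
  have e2 : ∀ f, (d + 1 : ℝ) * lag m d f = lag m d ((d + 1) * f) := by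
    intro f
    rw [← smul_eq_mul, ← map_smul, smul_eq_C_mul]
    simp
  have e3 : ∀ k : Fin m, lag m d (X k * (G k * vdm m ^ 2)) =
      lag m d (X k * pderiv k (G k * vdm m ^ 2) +
        ((d : MvPolynomial (Fin m) ℝ) + 1) * (G k * vdm m ^ 2)) := by
    intro k
    rw [lag_ibp, e2, map_add]
  rw [e1, Finset.sum_congr rfl fun k _ => e3 k, ← map_sum]
  congr 1
  rw [add_mul, ← hV2, add_mul, Finset.mul_sum, Finset.sum_mul, Finset.sum_mul,
    ← Finset.sum_add_distrib, ← Finset.sum_add_distrib]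
  refine Finset.sum_congr rfl fun k _ => ?_
  rw [Derivation.leibniz]
  simp only [smul_eq_mul]
  ring

theorem X_mul_pderiv_monoOf {α : Type} [Fintype α] {m : ℕ} (φ : α → Fin m) (k : Fin m) :
    X k * pderiv k (monoOf φ) = (∑ x, if φ x = k then 1 else 0) * monoOf φ := by
  have := derivation_prod (X k • pderiv (R := ℝ) k) Finset.univ (fun x => X (φ x))
    (fun x => if φ x = k then 1 else 0) (by
      intro x _
      rw [Derivation.smul_apply, pderiv_X, Pi.single_apply, smul_eq_mul]
      split_ifs with h <;> simp_all)
  rw [Derivation.smul_apply, smul_eq_mul] at this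
  exact this

theorem monoOf_option {α : Type} [Fintype α] {m : ℕ} (φ : Option α → Fin m) :
    monoOf φ = X (φ none) * monoOf (fun x => φ (some x)) := by
  rw [monoOf, Fintype.prod_option]; rfl

theorem sum_option_fun {α : Type} [Fintype α] [DecidableEq α] {m : ℕ} {M : Type} [AddCommMonoid M]
    (f : (Option α → Fin m) → M) :
    ∑ φ, f φ = ∑ k : Fin m, ∑ ψ : α → Fin m, f (fun x => x.elim k ψ) := by
  rw [← Fintype.sum_prod_type']
  symm
  refine Fintype.sum_bijective (fun p : Fin m × (α → Fin m) => fun x : Option α => x.elim p.1 p.2)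
    ⟨?_, ?_⟩ _ _ (fun _ => rfl)
  · rintro ⟨k, ψ⟩ ⟨k', ψ'⟩ h
    have h1 : k = k' := congrFun h none
    have h2 : ψ = ψ' := funext fun x => congrFun h (some x)
    rw [h1, h2]
  · intro φ
    refine ⟨(φ none, fun x => φ (some x)), ?_⟩
    funext x
    cases x <;> rfl

theorem pw_swap_oc {α : Type} [Fintype α] [DecidableEq α] (m : ℕ) (σ : Equiv.Perm α)
    (a : Option α) :
    pw m (Equiv.swap none a * Equiv.optionCongr σ) =
      ∑ k, X k * ∑ ψ ∈ Finset.univ.filter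
        (fun ψ : α → Fin m => ψ ∘ σ = ψ ∧ k = a.elim k ψ), monoOf ψ := by
  unfold pw
  rw [Finset.sum_filter, sum_option_fun]
  refine Finset.sum_congr rfl fun k _ => ?_
  rw [Finset.mul_sum, Finset.sum_filter]
  refine Finset.sum_congr rfl fun ψ _ => ?_
  simp only [comp_swap_optionCongr, monoOf_option, Option.elim_none, Option.elim_some]

theorem loop_oc {α : Type} [Fintype α] [DecidableEq α] (m n : ℕ) (hmn : m ≤ n)
    (σ : Equiv.Perm α) :
    lag m (n - m) (pw m (Equiv.optionCongr σ) * vdm m ^ 2) =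
      (m * n + Fintype.card α : ℕ) * lag m (n - m) (pw m σ * vdm m ^ 2) := by
  have h0 : pw m (Equiv.optionCongr σ) = ∑ k, X k * pw m σ := by
    have := pw_swap_oc m σ none
    rw [Equiv.swap_self, ← Equiv.Perm.one_def, one_mul] at this
    rw [this]
    simp [pw]
  rw [h0, gen_loop m (n - m) (fun _ => pw m σ) (fun _ _ => pw m σ) (by intros; ring)
    (by intros; rfl)]
  have h1 : ∑ k : Fin m, X k * pderiv k (pw m σ) = (Fintype.card α : MvPolynomial (Fin m) ℝ)
      * pw m σ := by
    unfold pw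
    simp only [map_sum, Finset.mul_sum, X_mul_pderiv_monoOf]
    rw [Finset.sum_comm]
    refine Finset.sum_congr rfl fun φ _ => ?_
    rw [← Finset.sum_mul, Finset.sum_comm]
    simp
  rw [h1]
  rw [← nsmul_eq_mul (m * n + Fintype.card α), ← map_nsmul]
  congr 1
  simp only [Finset.sum_const, Finset.card_univ, Fintype.card_fin, nsmul_eq_mul]
  obtain ⟨d, rfl⟩ := Nat.exists_eq_add_of_le hmn
  rw [Nat.add_sub_cancel_left]
  push_cast
  ring

end Poly

section Loop

open MvPolynomial

noncomputable def gP {α : Type} [Fintype α] [DecidableEq α] (m : ℕ) (σ : Equiv.Perm α) (y : α)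
    (k : Fin m) : MvPolynomial (Fin m) ℝ :=
  ∑ φ ∈ Finset.univ.filter (fun φ : α → Fin m => φ ∘ σ = φ ∧ φ y = k), monoOf φ

noncomputable def hP {α : Type} [Fintype α] [DecidableEq α] (m : ℕ) (σ : Equiv.Perm α) (y x : α)
    (k l : Fin m) : MvPolynomial (Fin m) ℝ :=
  ∑ φ ∈ Finset.univ.filter
    (fun φ : α → Fin m => φ ∘ ⇑(σ * Equiv.swap x y) = φ ∧ φ x = k ∧ φ y = l), monoOf φ

noncomputable def aP {α : Type} [Fintype α] [DecidableEq α] (m : ℕ) (σ : Equiv.Perm α) (y : α)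
    (k l : Fin m) (x : α) : MvPolynomial (Fin m) ℝ :=
  if x = y then gP m σ y l else hP m σ y x k l

theorem monoOf_update {α : Type} [Fintype α] [DecidableEq α] {m : ℕ} (φ : α → Fin m) (z : α)
    (k l : Fin m) (h : φ z = l) :
    X k * monoOf φ = X l * monoOf (Function.update φ z k) := by
  unfold monoOf
  rw [← Finset.mul_prod_erase _ _ (Finset.mem_univ z),
    ← Finset.mul_prod_erase _ (fun x => X (Function.update φ z k x)) (Finset.mem_univ z)]
  have : ∏ x ∈ Finset.univ.erase z, (X (Function.update φ z k x) : MvPolynomial (Fin m) ℝ) =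
      ∏ x ∈ Finset.univ.erase z, X (φ x) := by
    refine Finset.prod_congr rfl fun x hx => ?_
    rw [Function.update_of_ne (Finset.mem_erase.1 hx).1]
  rw [this, Function.update_self, h]
  ring

theorem sum_update {α : Type} [Fintype α] [DecidableEq α] {m : ℕ} (p q : (α → Fin m) → Prop)
    [DecidablePred p] [DecidablePred q] (z : α) (k l : Fin m)
    (hp : ∀ φ, p φ → φ z = l ∧ q (Function.update φ z k))
    (hq : ∀ φ, q φ → φ z = k ∧ p (Function.update φ z l)) :
    X k * ∑ φ ∈ Finset.univ.filter p, monoOf φ = X l * ∑ φ ∈ Finset.univ.filter q, monoOf φ := by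
  rw [Finset.mul_sum, Finset.mul_sum]
  refine Finset.sum_bij' (fun φ _ => Function.update φ z k) (fun φ _ => Function.update φ z l)
    ?_ ?_ ?_ ?_ ?_
  · intro φ h
    simp only [Finset.mem_filter, Finset.mem_univ, true_and] at h ⊢
    exact (hp φ h).2
  · intro φ h
    simp only [Finset.mem_filter, Finset.mem_univ, true_and] at h ⊢
    exact (hq φ h).2
  · intro φ h
    simp only [Finset.mem_filter, Finset.mem_univ, true_and] at h
    simp [← (hp φ h).1]
  · intro φ h
    simp only [Finset.mem_filter, Finset.mem_univ, true_and] at h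
    simp [← (hq φ h).1]
  · intro φ h
    simp only [Finset.mem_filter, Finset.mem_univ, true_and] at h
    exact monoOf_update φ z k l (hp φ h).1

theorem fixed_iff {α β : Type} (σ : Equiv.Perm α) (φ : α → β) :
    φ ∘ σ = φ ↔ ∀ z, φ (σ z) = φ z := by
  simp [funext_iff]

theorem fixed_swap_iff {α β : Type} [DecidableEq α] (σ : Equiv.Perm α) (x y : α) (hxy : x ≠ y)
    (φ : α → β) :
    φ ∘ ⇑(σ * Equiv.swap x y) = φ ↔ φ (σ y) = φ x ∧ φ (σ x) = φ y ∧
      ∀ z, z ≠ x → z ≠ y → φ (σ z) = φ z := by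
  rw [fixed_iff]
  constructor
  · intro h
    refine ⟨by simpa using h x, by simpa using h y, fun z h1 h2 => ?_⟩
    simpa [Equiv.swap_apply_of_ne_of_ne h1 h2] using h z
  · rintro ⟨h1, h2, h3⟩ z
    by_cases hx : z = x
    · subst hx; simpa using h1
    · by_cases hy : z = y
      · subst hy; simpa using h2
      · simpa [Equiv.swap_apply_of_ne_of_ne hx hy] using h3 z hx hy

theorem aP_step {α : Type} [Fintype α] [DecidableEq α] (m : ℕ) (σ : Equiv.Perm α) (y x : α)
    (k l : Fin m) :
    X k * aP m σ y k l x = X l * (if σ x = y then gP m σ y k else aP m σ y k l (σ x)) := by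
  have hinj : ∀ a b, σ a = σ b → a = b := fun a b h => σ.injective h
  by_cases hx : x = y
  · subst hx
    by_cases hs : σ x = x
    · simp only [aP, hs, if_true, gP]
      apply sum_update _ _ x <;> simp only [fixed_iff, Function.update_apply] <;> grind
    · simp only [aP, hs, if_true, if_false, gP, hP, fixed_swap_iff _ _ _ hs]
      apply sum_update _ _ (σ x) <;> simp only [fixed_iff, Function.update_apply] <;> grind
  · by_cases hs : σ x = y
    · simp only [aP, hs, if_true, hx, if_false, gP, hP, fixed_swap_iff _ _ _ hx]
      apply sum_update _ _ y <;> simp only [fixed_iff, Function.update_apply] <;> grind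
    · simp only [aP, hs, hx, if_false, hP, fixed_swap_iff _ _ _ hx, fixed_swap_iff _ _ _ hs]
      apply sum_update _ _ (σ x) <;> simp only [Function.update_apply] <;> grind

theorem aP_sum {α : Type} [Fintype α] [DecidableEq α] (m : ℕ) (σ : Equiv.Perm α) (y : α)
    (k l : Fin m) :
    (X k - X l) * ∑ x, aP m σ y k l x = X l * (gP m σ y k - gP m σ y l) := by
  have h1 : X k * ∑ x, aP m σ y k l x =
      X l * ∑ x, (if x = y then gP m σ y k else aP m σ y k l x) := by
    rw [← Equiv.sum_comp σ (fun x => if x = y then gP m σ y k else aP m σ y k l x),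
      Finset.mul_sum, Finset.mul_sum]
    exact Finset.sum_congr rfl fun x _ => aP_step m σ y x k l
  have h2 : ∑ x, (if x = y then gP m σ y k else aP m σ y k l x) =
      gP m σ y k + ∑ x ∈ Finset.univ.erase y, aP m σ y k l x := by
    rw [← Finset.add_sum_erase _ _ (Finset.mem_univ y), if_pos rfl]
    congr 1
    exact Finset.sum_congr rfl fun x hx => if_neg (Finset.mem_erase.1 hx).1
  have h3 : ∑ x, aP m σ y k l x =
      gP m σ y l + ∑ x ∈ Finset.univ.erase y, aP m σ y k l x := by
    rw [← Finset.add_sum_erase _ _ (Finset.mem_univ y)]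
    simp [aP]
  rw [h2] at h1
  linear_combination h1 - X l * h3

noncomputable def cP {α : Type} [Fintype α] [DecidableEq α] (m : ℕ) (σ : Equiv.Perm α) (y : α)
    (k l : Fin m) : MvPolynomial (Fin m) ℝ :=
  gP m σ y k + gP m σ y l + ∑ x ∈ Finset.univ.erase y, hP m σ y x k l

theorem cP_spec {α : Type} [Fintype α] [DecidableEq α] (m : ℕ) (σ : Equiv.Perm α) (y : α)
    (k l : Fin m) :
    X k * gP m σ y k - X l * gP m σ y l = cP m σ y k l * (X k - X l) := by
  have h := aP_sum m σ y k l
  have h3 : ∑ x, aP m σ y k l x =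
      gP m σ y l + ∑ x ∈ Finset.univ.erase y, hP m σ y x k l := by
    rw [← Finset.add_sum_erase _ _ (Finset.mem_univ y)]
    congr 1
    · simp [aP]
    · exact Finset.sum_congr rfl fun x hx => if_neg (Finset.mem_erase.1 hx).1
  rw [h3] at h
  unfold cP
  linear_combination -h

theorem cP_symm {α : Type} [Fintype α] [DecidableEq α] (m : ℕ) (σ : Equiv.Perm α) (y : α)
    (k l : Fin m) (hkl : k ≠ l) : cP m σ y k l = cP m σ y l k := by
  have h1 := cP_spec m σ y k l
  have h2 := cP_spec m σ y l k
  have hne : (X k - X l : MvPolynomial (Fin m) ℝ) ≠ 0 := by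
    rw [sub_ne_zero]
    exact fun h => hkl (X_injective h)
  apply mul_right_cancel₀ hne
  linear_combination -h1 - h2

theorem sum_gP {α : Type} [Fintype α] [DecidableEq α] (m : ℕ) (σ : Equiv.Perm α) (y : α) :
    ∑ k, gP m σ y k = pw m σ := by
  unfold gP pw
  simp only [Finset.sum_filter]
  rw [Finset.sum_comm]
  refine Finset.sum_congr rfl fun φ _ => ?_
  simp only [ite_and]
  split_ifs <;> simp

theorem sum_hP {α : Type} [Fintype α] [DecidableEq α] (m : ℕ) (σ : Equiv.Perm α) (y x : α) :
    ∑ k, ∑ l, hP m σ y x k l = pw m (σ * Equiv.swap x y) := by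
  unfold hP pw
  simp only [Finset.sum_filter]
  have : ∀ k : Fin m, ∑ l : Fin m, ∑ φ : α → Fin m,
      (if φ ∘ ⇑(σ * Equiv.swap x y) = φ ∧ φ x = k ∧ φ y = l then monoOf φ else 0) =
      ∑ φ : α → Fin m, (if φ ∘ ⇑(σ * Equiv.swap x y) = φ ∧ φ x = k then monoOf φ else 0) := by
    intro k
    rw [Finset.sum_comm]
    refine Finset.sum_congr rfl fun φ _ => ?_
    simp only [ite_and]
    split_ifs <;> simp
  simp only [this]
  rw [Finset.sum_comm]
  refine Finset.sum_congr rfl fun φ _ => ?_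
  simp only [ite_and]
  split_ifs <;> simp

theorem hP_diag {α : Type} [Fintype α] [DecidableEq α] (m : ℕ) (σ : Equiv.Perm α) (y x : α)
    (hxy : x ≠ y) (k : Fin m) :
    hP m σ y x k k = ∑ φ ∈ Finset.univ.filter
      (fun φ : α → Fin m => φ ∘ σ = φ ∧ φ y = k), if φ x = k then monoOf φ else 0 := by
  unfold hP
  rw [← Finset.sum_filter, Finset.filter_filter]
  refine Finset.sum_congr ?_ fun _ _ => rfl
  ext φ
  simp only [Finset.mem_filter, Finset.mem_univ, true_and, fixed_swap_iff _ _ _ hxy, fixed_iff]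
  constructor
  · rintro ⟨⟨h1, h2, h3⟩, h4, h5⟩
    refine ⟨⟨fun z => ?_, h5⟩, h4⟩
    by_cases hx : z = x
    · rw [hx, h2, h4, h5]
    · by_cases hy : z = y
      · rw [hy, h1, h4, h5]
      · exact h3 z hx hy
  · rintro ⟨⟨h1, h2⟩, h3⟩
    exact ⟨⟨by rw [h1, h2, h3], by rw [h1, h2, h3], fun z _ _ => h1 z⟩, h3, h2⟩

theorem sum_pderiv_gP {α : Type} [Fintype α] [DecidableEq α] (m : ℕ) (σ : Equiv.Perm α) (y : α) :
    ∑ k, X k * pderiv k (gP m σ y k) =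
      pw m σ + ∑ k, ∑ x ∈ Finset.univ.erase y, hP m σ y x k k := by
  rw [← sum_gP m σ y, ← Finset.sum_add_distrib]
  refine Finset.sum_congr rfl fun k _ => ?_
  rw [Finset.sum_congr rfl fun x hx => hP_diag m σ y x (Finset.mem_erase.1 hx).1 k]
  rw [Finset.sum_comm]
  unfold gP
  rw [← Finset.sum_add_distrib, map_sum, Finset.mul_sum]
  refine Finset.sum_congr rfl fun φ hφ => ?_
  simp only [Finset.mem_filter, Finset.mem_univ, true_and] at hφ
  rw [X_mul_pderiv_monoOf, Finset.sum_mul, ← Finset.add_sum_erase _ _ (Finset.mem_univ y)]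
  simp [hφ.2]

theorem pw_oc_swap {α : Type} [Fintype α] [DecidableEq α] (m : ℕ) (σ : Equiv.Perm α) (z : α) :
    pw m (Equiv.optionCongr σ * Equiv.swap none (some z)) = ∑ k, X k * gP m σ z k := by
  rw [oc_mul_swap, pw_swap_oc]
  refine Finset.sum_congr rfl fun k _ => ?_
  congr 1
  unfold gP
  refine Finset.sum_congr ?_ fun _ _ => rfl
  ext φ
  simp only [Finset.mem_filter, Finset.mem_univ, true_and, Option.elim_some, fixed_iff]
  grind

theorem loop_oc_swap {α : Type} [Fintype α] [DecidableEq α] (m n : ℕ) (hmn : m ≤ n)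
    (σ : Equiv.Perm α) (z : α) :
    lag m (n - m) (pw m (Equiv.optionCongr σ * Equiv.swap none (some z)) * vdm m ^ 2) =
      (m + n : ℕ) * lag m (n - m) (pw m σ * vdm m ^ 2) +
        ∑ x ∈ Finset.univ.erase z, lag m (n - m) (pw m (σ * Equiv.swap x z) * vdm m ^ 2) := by
  rw [pw_oc_swap, gen_loop m (n - m) (gP m σ z) (cP m σ z) (cP_spec m σ z) (cP_symm m σ z)]
  have h1 : ∑ i, ∑ l, cP m σ z i l = 2 * m * pw m σ +
      ∑ x ∈ Finset.univ.erase z, pw m (σ * Equiv.swap x z) := by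
    have h2 : ∑ x ∈ Finset.univ.erase z, pw m (σ * Equiv.swap x z) =
        ∑ i, ∑ l, ∑ x ∈ Finset.univ.erase z, hP m σ z x i l := by
      rw [Finset.sum_congr rfl fun x _ => (sum_hP m σ z x).symm, Finset.sum_comm]
      refine Finset.sum_congr rfl fun i _ => ?_
      rw [Finset.sum_comm]
    rw [h2]
    simp only [cP, Finset.sum_add_distrib, sum_gP, Finset.sum_const, Finset.card_univ,
      Fintype.card_fin, nsmul_eq_mul, ← Finset.mul_sum]
    ring
  have h3 : ∑ k, cP m σ z k k = 2 * pw m σ + ∑ k, ∑ x ∈ Finset.univ.erase z, hP m σ z x k k := by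
    simp only [cP, Finset.sum_add_distrib, sum_gP]
    ring
  rw [h1, h3, sum_pderiv_gP, sum_gP, ← nsmul_eq_mul, ← map_nsmul, ← map_sum, ← map_add]
  congr 1
  obtain ⟨d, rfl⟩ := Nat.exists_eq_add_of_le hmn
  rw [Nat.add_sub_cancel_left, nsmul_eq_mul, ← Finset.sum_mul]
  push_cast
  ring

end Loop

section Main

open MvPolynomial

theorem monoOf_comp_equiv {α β : Type} [Fintype α] [Fintype β] {m : ℕ} (e : α ≃ β)
    (φ : β → Fin m) : monoOf (φ ∘ e) = monoOf φ := by
  unfold monoOf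
  exact Equiv.prod_comp e (fun x => X (φ x))

theorem pw_permCongr {α β : Type} [Fintype α] [DecidableEq α] [Fintype β] [DecidableEq β]
    (e : α ≃ β) (m : ℕ) (σ : Equiv.Perm α) :
    pw m (e.permCongr σ) = pw m σ := by
  unfold pw
  rw [Finset.sum_filter, Finset.sum_filter]
  refine Fintype.sum_equiv (e.symm.arrowCongr (Equiv.refl _)) _ _ fun φ => ?_
  have h1 : (e.symm.arrowCongr (Equiv.refl (Fin m))) φ = φ ∘ e := rfl
  rw [h1, monoOf_comp_equiv]
  have h2 : φ ∘ ⇑(e.permCongr σ) = φ ↔ (φ ∘ e) ∘ σ = φ ∘ e := by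
    rw [funext_iff, funext_iff]
    constructor
    · intro h x
      simpa using h (e x)
    · intro h x
      simpa using h (e.symm x)
  simp only [h2]

/-- The key property: expectation of power sums is the convolution. -/
def Good (m n : ℕ) (α : Type) [Fintype α] [DecidableEq α] : Prop :=
  ∀ π : Equiv.Perm α, lag m (n - m) (pw m π * vdm m ^ 2) =
    (conv m n π : ℝ) * lag m (n - m) (vdm m ^ 2)

theorem good_option {α : Type} [Fintype α] [DecidableEq α] (m n : ℕ) (hmn : m ≤ n)
    (h : Good m n α) : Good m n (Option α) := by
  intro π
  have hdec := Equiv.Perm.decomposeOption.symm_apply_apply π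
  generalize hp : Equiv.Perm.decomposeOption π = p at hdec
  obtain ⟨a, σ⟩ := p
  have hdec' : π = Equiv.swap none a * Equiv.optionCongr σ := hdec.symm
  rw [hdec']
  cases a with
  | none =>
    rw [Equiv.swap_self, ← Equiv.Perm.one_def, one_mul, loop_oc m n hmn, h, conv_oc]
    push_cast
    ring
  | some y =>
    obtain ⟨z, rfl⟩ := σ.surjective y
    rw [← oc_mul_swap, loop_oc_swap m n hmn, conv_oc_swap, h]
    rw [Finset.sum_congr rfl fun x _ => h (σ * Equiv.swap x z)]
    push_cast
    rw [← Finset.sum_mul]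
    ring

theorem good_congr {α β : Type} [Fintype α] [DecidableEq α] [Fintype β] [DecidableEq β]
    (e : α ≃ β) (m n : ℕ) (h : Good m n α) : Good m n β := by
  intro π
  obtain ⟨σ, rfl⟩ := e.permCongr.surjective π
  rw [pw_permCongr, conv_permCongr]
  exact h σ

theorem good_fin (m n r : ℕ) (hmn : m ≤ n) : Good m n (Fin r) := by
  induction r with
  | zero =>
    intro π
    have h1 : pw m π = 1 := by
      unfold pw monoOf
      rw [Finset.filter_true_of_mem (fun φ _ => Subsingleton.elim _ _)]
      simp
    have h2 : conv m n π = 1 := by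
      unfold conv fixN
      simp only [Finset.filter_true_of_mem (fun φ _ => Subsingleton.elim _ _)]
      simp
    rw [h1, h2]
    simp
  | succ r ih => exact good_congr (finSuccEquiv r).symm m n (good_option m n hmn ih)

/-! ### Stabilizer sums -/

/-- Weighted count of the stabilizer of a colouring. -/
def stabSum {α : Type} [Fintype α] [DecidableEq α] {m : ℕ} (lam : ℕ) (φ : α → Fin m) : ℕ :=
  ∑ π ∈ Finset.univ.filter (fun π : Equiv.Perm α => φ ∘ π = φ), fixN lam π

/-- fibre size -/
def fib {α : Type} [Fintype α] {m : ℕ} (φ : α → Fin m) (k : Fin m) : ℕ :=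
  ∑ x, if φ x = k then 1 else 0

theorem stabSum_option {α : Type} [Fintype α] [DecidableEq α] {m : ℕ} (lam : ℕ)
    (φ : Option α → Fin m) :
    stabSum lam φ = (lam + fib (fun x => φ (some x)) (φ none)) *
      stabSum lam (fun x => φ (some x)) := by
  unfold stabSum
  rw [Finset.sum_filter, sum_perm_option]
  have h : ∀ b : Option α, (∑ u : Equiv.Perm α,
      if φ ∘ ⇑(Equiv.swap none b * Equiv.optionCongr u) = φ then
        fixN lam (Equiv.swap none b * Equiv.optionCongr u) else 0) =
      (if φ none = φ b then wt lam b else 0) * ∑ π ∈ Finset.univ.filter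
        (fun π : Equiv.Perm α => (fun x => φ (some x)) ∘ π = fun x => φ (some x)), fixN lam π := by
    intro b
    rw [Finset.sum_filter, Finset.mul_sum]
    refine Finset.sum_congr rfl fun u _ => ?_
    simp only [comp_swap_optionCongr, fixN_swap_optionCongr]
    split_ifs <;> simp_all
  simp only [h]
  rw [← Finset.sum_mul, Fintype.sum_option]
  congr 1
  simp only [if_true, wt, fib]
  congr 1
  exact Finset.sum_congr rfl fun x _ => by simp only [eq_comm]

theorem fib_option {α : Type} [Fintype α] {m : ℕ} (φ : Option α → Fin m) (k : Fin m) :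
    fib φ k = (if φ none = k then 1 else 0) + fib (fun x => φ (some x)) k := by
  unfold fib
  rw [Fintype.sum_option]

theorem stabSum_eq_option {α : Type} [Fintype α] [DecidableEq α] (m lam : ℕ)
    (h : ∀ φ : α → Fin m, stabSum lam φ = ∏ k, Nat.ascFactorial lam (fib φ k))
    (φ : Option α → Fin m) : stabSum lam φ = ∏ k, Nat.ascFactorial lam (fib φ k) := by
  rw [stabSum_option, h, ← Finset.mul_prod_erase _ _ (Finset.mem_univ (φ none)),
    ← Finset.mul_prod_erase _ (fun k => Nat.ascFactorial lam (fib φ k))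
      (Finset.mem_univ (φ none)), ← mul_assoc]
  congr 1
  · rw [fib_option φ, if_pos rfl, add_comm 1, Nat.ascFactorial_succ]
  · refine Finset.prod_congr rfl fun k hk => ?_
    rw [fib_option φ, if_neg (Finset.mem_erase.1 hk).1.symm, zero_add]

theorem stabSum_congr {α β : Type} [Fintype α] [DecidableEq α] [Fintype β] [DecidableEq β]
    (e : α ≃ β) (m lam : ℕ) (φ : β → Fin m) : stabSum lam φ = stabSum lam (φ ∘ e) := by
  unfold stabSum
  rw [Finset.sum_filter, Finset.sum_filter]
  symm
  refine Fintype.sum_equiv e.permCongr _ _ fun σ => ?_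
  have h2 : φ ∘ ⇑(e.permCongr σ) = φ ↔ (φ ∘ e) ∘ σ = φ ∘ e := by
    rw [funext_iff, funext_iff]
    constructor
    · intro h x
      simpa using h (e x)
    · intro h x
      simpa using h (e.symm x)
  simp only [h2, fixN_permCongr]

theorem fib_congr {α β : Type} [Fintype α] [Fintype β]
    (e : α ≃ β) (m : ℕ) (φ : β → Fin m) (k : Fin m) : fib φ k = fib (φ ∘ e) k := by
  unfold fib
  exact (Equiv.sum_comp e (fun x => if φ x = k then 1 else 0)).symm

theorem stabSum_fin (m lam r : ℕ) (φ : Fin r → Fin m) :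
    stabSum lam φ = ∏ k, Nat.ascFactorial lam (fib φ k) := by
  induction r with
  | zero =>
    unfold stabSum fixN fib
    simp only [Finset.filter_true_of_mem (fun φ _ => Subsingleton.elim _ _)]
    simp
  | succ r ih =>
    rw [stabSum_congr (finSuccEquiv r).symm, stabSum_eq_option m lam ih]
    simp only [← fib_congr]

/-! ### Counting colourings -/

theorem monoOf_eq_monomial {α : Type} [Fintype α] {m : ℕ} (φ : α → Fin m) :
    monoOf φ = monomial (Finsupp.equivFunOnFinite.symm (fib φ)) (1 : ℝ) := by
  unfold monoOf
  have h : (Finsupp.equivFunOnFinite.symm (fib φ)) = ∑ x, Finsupp.single (φ x) 1 := by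
    ext k
    simp [fib, Finsupp.single_apply, Finsupp.finsetSum_apply]
  rw [h]
  simp only [X]
  rw [monomial_sum_one]

theorem sum_colourings (m r : ℕ) (F : (Fin m → ℕ) → ℝ) :
    ∑ φ : Fin r → Fin m, F (fib φ) = ∑ a ∈ Finset.Nat.antidiagonalTuple m r,
      (r.factorial : ℝ) / (∏ k, ((a k).factorial : ℝ)) * F a := by
  have e1 : (∑ k : Fin m, (X k : MvPolynomial (Fin m) ℝ)) ^ r =
      ∑ φ : Fin r → Fin m, monoOf φ := by
    rw [← Fin.prod_const, Finset.prod_univ_sum, Fintype.piFinset_univ]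
    rfl
  have e2 := Finset.sum_pow_eq_sum_piAntidiag (Finset.univ : Finset (Fin m))
    (fun k => (X k : MvPolynomial (Fin m) ℝ)) r
  rw [Finset.piAntidiag_univ_fin_eq_antidiagonalTuple, e1] at e2
  have e3 := congrArg (linOf (fun a => F a)) e2
  rw [map_sum, map_sum] at e3
  have h1 : ∀ φ : Fin r → Fin m, linOf (fun a => F a) (monoOf φ) = F (fib φ) := by
    intro φ
    rw [monoOf_eq_monomial, linOf_monomial, one_mul]
    rfl
  simp only [h1] at e3
  rw [e3]
  refine Finset.sum_congr rfl fun a ha => ?_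
  have h2 : ∏ k, (X k : MvPolynomial (Fin m) ℝ) ^ a k =
      monomial (Finsupp.equivFunOnFinite.symm a) 1 := by
    rw [monomial_eq, Finsupp.prod_fintype _ _ (by simp)]
    simp
  rw [h2, ← nsmul_eq_mul, map_nsmul, linOf_monomial, nsmul_eq_mul, one_mul]
  have h3 : ((Nat.multinomial Finset.univ a : ℕ) : ℝ) =
      (r.factorial : ℝ) / (∏ k, ((a k).factorial : ℝ)) := by
    rw [eq_div_iff (Finset.prod_ne_zero_iff.2 fun k _ => by positivity)]
    have := Nat.multinomial_spec Finset.univ a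
    rw [Finset.Nat.mem_antidiagonalTuple.1 ha] at this
    rw [← this]
    push_cast
    ring
  rw [h3]
  rfl

end Main

section Integrals

open MvPolynomial

theorem gamma_integrable (d : ℕ) :
    Integrable (fun x : ℝ => x ^ d * Real.exp (-x)) (volume.restrict (Set.Ici 0)) := by
  have h := Real.GammaIntegral_convergent (s := (d : ℝ) + 1) (by positivity)
  have h2 : IntegrableOn (fun x : ℝ => x ^ d * Real.exp (-x)) (Set.Ioi 0) := by
    refine h.congr_fun (fun x _ => ?_) measurableSet_Ioi
    simp only [add_sub_cancel_right, Real.rpow_natCast]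
    ring
  exact (integrableOn_Ici_iff_integrableOn_Ioi).2 h2

theorem gamma_integral (d : ℕ) :
    ∫ x in Set.Ici (0 : ℝ), x ^ d * Real.exp (-x) = (d.factorial : ℝ) := by
  rw [integral_Ici_eq_integral_Ioi, ← Real.Gamma_nat_eq_factorial,
    Real.Gamma_eq_integral (by positivity)]
  refine setIntegral_congr_fun measurableSet_Ioi (fun x _ => ?_)
  simp only [add_sub_cancel_right, Real.rpow_natCast]
  ring

theorem orthant_restrict (m : ℕ) :
    (volume : Measure (Fin m → ℝ)).restrict (orthant m) =
      Measure.pi (fun _ : Fin m => (volume : Measure ℝ).restrict (Set.Ici 0)) := by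
  have h : orthant m = Set.univ.pi (fun _ : Fin m => Set.Ici (0 : ℝ)) := by
    ext q
    simp only [orthant, Set.mem_setOf_eq, Set.mem_univ_pi, Set.mem_Ici]
  rw [h, volume_pi, Measure.restrict_pi_pi]

theorem eval_mul_weight (m d : ℕ) (a : Fin m →₀ ℕ) (c : ℝ) (q : Fin m → ℝ) :
    eval q (monomial a c) * ∏ k, (q k ^ d * Real.exp (-(q k))) =
      c * ∏ k, (q k ^ (d + a k) * Real.exp (-(q k))) := by
  rw [eval_monomial, Finsupp.prod_fintype _ _ (fun i => pow_zero _), mul_assoc,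
    ← Finset.prod_mul_distrib]
  congr 1
  refine Finset.prod_congr rfl fun k _ => ?_
  rw [pow_add]
  ring

theorem lag_integral (m d : ℕ) (f : MvPolynomial (Fin m) ℝ) :
    Integrable (fun q : Fin m → ℝ => eval q f * ∏ k, (q k ^ d * Real.exp (-(q k))))
      (volume.restrict (orthant m)) ∧
    ∫ q in orthant m, eval q f * ∏ k, (q k ^ d * Real.exp (-(q k))) = lag m d f := by
  rw [orthant_restrict]
  induction f using MvPolynomial.induction_on' with
  | monomial a c =>
    simp only [eval_mul_weight]
    constructor
    · refine Integrable.const_mul ?_ c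
      exact Integrable.fintype_prod (f := fun (k : Fin m) (x : ℝ) => x ^ (d + a k) * Real.exp (-x))
        (fun k => gamma_integrable _)
    · rw [integral_const_mul, lag, linOf_monomial,
        integral_fintype_prod_eq_prod (fun (k : Fin m) (x : ℝ) => x ^ (d + a k) * Real.exp (-x))]
      simp only [gamma_integral]
  | add p q hp hq =>
    simp only [map_add, add_mul]
    refine ⟨hp.1.add hq.1, ?_⟩
    rw [integral_add hp.1 hq.1, hp.2, hq.2]

theorem eval_vdm (m : ℕ) (q : Fin m → ℝ) : eval q (vdm m) = vandermonde q := by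
  simp [vdm, vandermonde]

theorem lam_eq_lag (m n : ℕ) : Lam m n = lag m (n - m) (vdm m ^ 2) := by
  rw [← (lag_integral m (n - m) (vdm m ^ 2)).2, Lam]
  simp only [map_pow, eval_vdm]

theorem int_eq_lag (m d : ℕ) (a : Fin m → ℕ) :
    ∫ q in orthant m, (vandermonde q) ^ 2 * ∏ k : Fin m, (q k ^ (d + a k) * Real.exp (-(q k))) =
      lag m d (monomial (Finsupp.equivFunOnFinite.symm a) 1 * vdm m ^ 2) := by
  rw [← (lag_integral m d _).2]
  congr 1
  funext q
  have h := eval_mul_weight m d (Finsupp.equivFunOnFinite.symm a) 1 q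
  simp only [Finsupp.equivFunOnFinite_symm_apply_apply, one_mul] at h
  rw [map_mul, map_pow, eval_vdm, ← h]
  ring

theorem lam_pos (m n : ℕ) : 0 < Lam m n := by
  have hInt := (lag_integral m (n - m) (vdm m ^ 2)).1
  simp only [map_pow, eval_vdm] at hInt
  have hmeas : MeasurableSet (orthant m) := by
    have h : orthant m = Set.univ.pi (fun _ : Fin m => Set.Ici (0 : ℝ)) := by
      ext q
      simp only [orthant, Set.mem_setOf_eq, Set.mem_univ_pi, Set.mem_Ici]
    rw [h]
    exact MeasurableSet.univ_pi fun _ => measurableSet_Ici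
  rw [Lam, setIntegral_pos_iff_support_of_nonneg_ae _ hInt]
  · have hsub : Set.univ.pi (fun k : Fin m => Set.Ioo ((k : ℕ) : ℝ) ((k : ℕ) + 1)) ⊆
        (Function.support fun q : Fin m → ℝ => (vandermonde q) ^ 2 *
          ∏ k : Fin m, (q k ^ (n - m) * Real.exp (-(q k)))) ∩ orthant m := by
      intro q hq
      simp only [Set.mem_pi, Set.mem_univ, true_imp_iff, Set.mem_Ioo] at hq
      have hpos : ∀ k, 0 < q k := fun k => lt_of_le_of_lt (Nat.cast_nonneg _) (hq k).1
      refine ⟨?_, fun k => (hpos k).le⟩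
      rw [Function.mem_support]
      refine mul_ne_zero (pow_ne_zero _ ?_) ?_
      · unfold vandermonde
        refine Finset.prod_ne_zero_iff.2 fun p hp => ?_
        have hlt : p.1 < p.2 := (Finset.mem_filter.1 hp).2
        have h1 : ((p.1 : ℕ) : ℝ) + 1 ≤ ((p.2 : ℕ) : ℝ) := by exact_mod_cast hlt
        have h2 := (hq p.1).2
        have h3 := (hq p.2).1
        linarith
      · refine Finset.prod_ne_zero_iff.2 fun k _ => ?_
        have := hpos k
        positivity
    refine lt_of_lt_of_le ?_ (measure_mono hsub)
    rw [Real.volume_pi_Ioo]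
    simp
  · refine (ae_restrict_iff' hmeas).2 (Filter.Eventually.of_forall fun q hq => ?_)
    have hq' : ∀ k, 0 ≤ q k := hq
    refine mul_nonneg (sq_nonneg _) (Finset.prod_nonneg fun k _ => ?_)
    have := hq' k
    positivity

theorem fSum_eq (r m n lam : ℕ) :
    fSum r m n lam = ∑ π : Equiv.Perm (Fin r), fixN lam π * conv m n π := by
  unfold fSum conv
  simp only [← fixN_eq_pow_cyc, fixN_inv, Finset.mul_sum]
  rw [Finset.sum_comm]
  conv_rhs => rw [Finset.sum_comm]
  rw [← Equiv.sum_comp (Equiv.inv (Equiv.Perm (Fin r)))]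
  refine Finset.sum_congr rfl fun u _ => ?_
  rw [← Equiv.sum_comp (Equiv.mulRight u)]
  refine Finset.sum_congr rfl fun π _ => ?_
  simp only [Equiv.inv_apply, Equiv.coe_mulRight, mul_inv_cancel_right, fixN_inv]
  ring

theorem fSum_mul_lam (r m n lam : ℕ) (hmn : m ≤ n) :
    (fSum r m n lam : ℝ) * Lam m n = ∑ a ∈ Finset.Nat.antidiagonalTuple m r,
      (r.factorial : ℝ) / (∏ k, ((a k).factorial : ℝ)) *
        ((∏ k, (Nat.ascFactorial lam (a k) : ℝ)) *
          lag m (n - m) (monomial (Finsupp.equivFunOnFinite.symm a) 1 * vdm m ^ 2)) := by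
  rw [← sum_colourings m r (fun a => (∏ k, (Nat.ascFactorial lam (a k) : ℝ)) *
          lag m (n - m) (monomial (Finsupp.equivFunOnFinite.symm a) 1 * vdm m ^ 2))]
  rw [fSum_eq, lam_eq_lag]
  push_cast
  rw [Finset.sum_mul]
  have h1 : ∀ π : Equiv.Perm (Fin r),
      (fixN lam π : ℝ) * (conv m n π : ℝ) * lag m (n - m) (vdm m ^ 2) =
        ∑ φ : Fin r → Fin m, if φ ∘ π = φ then
          (fixN lam π : ℝ) * lag m (n - m) (monoOf φ * vdm m ^ 2) else 0 := by
    intro π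
    rw [mul_assoc, ← good_fin m n r hmn π, pw, Finset.sum_mul, map_sum, Finset.mul_sum,
      Finset.sum_filter]
  rw [Finset.sum_congr rfl fun π _ => h1 π, Finset.sum_comm]
  refine Finset.sum_congr rfl fun φ _ => ?_
  rw [← Finset.sum_filter, ← Finset.sum_mul, ← monoOf_eq_monomial]
  congr 1
  have h2 := stabSum_fin m lam r φ
  unfold stabSum at h2
  exact_mod_cast h2

end Integrals

/-- Coefficient of `x^r` in the integral representation of `F(m,n,λ;x)`. -/
theorem fSum_div_factorial_eq_integral (m n lam r : ℕ) (hm : 0 < m) (hn : 0 < n)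
    (hlam : 0 < lam) (hmn : m ≤ n) :
    (fSum r m n lam : ℝ) / r.factorial =
      (1 / Lam m n) *
        ∑ a ∈ Finset.Nat.antidiagonalTuple m r,
          (∏ k : Fin m, (Nat.ascFactorial lam (a k) : ℝ) / (a k).factorial) *
            ∫ q in orthant m, (vandermonde q) ^ 2 *
              ∏ k : Fin m, (q k ^ (n - m + a k) * Real.exp (-(q k))) := by
  have hL : Lam m n ≠ 0 := (lam_pos m n).ne'
  have hr : (r.factorial : ℝ) ≠ 0 := by exact_mod_cast r.factorial_ne_zero
  have h := fSum_mul_lam r m n lam hmn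
  rw [div_eq_iff hr, one_div, mul_assoc, eq_inv_mul_iff_mul_eq₀ hL, mul_comm (Lam m n), h,
    Finset.sum_mul]
  refine Finset.sum_congr rfl fun a _ => ?_
  rw [int_eq_lag, Finset.prod_div_distrib]
  ring
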